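/- Given two Gelfand–Tsetlin patterns with the same bottom row (u_1 < ... < u_n), each of which encodes a lozenge tiling of a half-hexagon, the number of pairs of such patterns (hence of lozenge tilings of the corresponding whole hexagon obtained by gluing along the diagonal) equals (∏_{1≤i<j≤n}(u_j - u_i)/(j-i))². -/

import Mathlib

open Finset

/-- A Gelfand–Tsetlin pattern with `n` rows: row `i` (for `i : Fin n`) has
entries `entry i 0, …, entry i i`, rows interlace, and entries beyond the
row length are normalized to `0`. -/
structure GTPattern (n : ℕ) where
  entry : Fin n → ℕ → ℕ
  interlace : ∀ i : Fin n, ∀ h : i.1 + 1 < n, ∀ j : ℕ, j ≤ i.1 →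
    entry ⟨i.1 + 1, h⟩ j ≤ entry i j ∧ entry i j < entry ⟨i.1 + 1, h⟩ (j + 1)
  support : ∀ i : Fin n, ∀ j : ℕ, i.1 < j → entry i j = 0

/-- The number of Gelfand–Tsetlin patterns with `n` rows and bottom row `u`. -/
noncomputable def GTPcount (n : ℕ) (u : Fin n → ℕ) : ℕ :=
  Nat.card {T : GTPattern n //
    ∀ j : Fin n, T.entry ⟨n - 1, Nat.sub_lt j.pos Nat.one_pos⟩ j.1 = u j}

/-- `GTP` of a finite set: patterns whose bottom row is the increasing
enumeration of `U`. -/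
noncomputable def GTPfinset (U : Finset ℕ) : ℕ :=
  GTPcount U.card (fun j => ((U.orderIsoOfFin rfl j : ℕ)))

/-- `P(A,B) = ∏_{(a,b) ∈ A×B, a<b} (b-a)`. -/
def Pprod (A B : Finset ℕ) : ℕ :=
  ∏ p ∈ (A ×ˢ B).filter (fun p => p.1 < p.2), (p.2 - p.1)

/-- The superfactorial `sf m = 1!·2!···m!`. -/
def superfactorial : ℕ → ℕ
  | 0 => 1
  | m + 1 => superfactorial m * Nat.factorial (m + 1)

/-!
Deleting the bottom row `u` of a pattern leaves a pattern whose bottom row `v` interlaces with `u`,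
so the number of patterns with bottom row `u` is the sum of the numbers for all such `v`.
The determinant `det (choose (u i) j)` satisfies the same recursion: differences of consecutive
rows clear its first column, and what remains is `∑ choose x j` over `u i ≤ x < u (i + 1)`, by the
hockey-stick identity. Reducing falling factorials to powers, this determinant is the Vandermonde
determinant of `u` divided by `∏ i!`, that is, by the Vandermonde determinant of `0, …, n - 1`.
-/

attribute [ext] GTPattern

/-- The rows `v` that may stand directly above the row `u` in a Gelfand–Tsetlin pattern. -/
def interlacingRows {n : ℕ} (u : Fin (n + 1) → ℕ) : Finset (Fin n → ℕ) :=
  Fintype.piFinset fun j => Ico (u j.castSucc) (u j.succ)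

theorem mem_interlacingRows {n : ℕ} {u : Fin (n + 1) → ℕ} {v : Fin n → ℕ} :
    v ∈ interlacingRows u ↔ ∀ j, u j.castSucc ≤ v j ∧ v j < u j.succ := by
  simp only [interlacingRows, Fintype.mem_piFinset, mem_Ico]

theorem strictMono_of_mem_interlacingRows {n : ℕ} {u : Fin (n + 1) → ℕ} {v : Fin n → ℕ}
    (hu : Monotone u) (hv : v ∈ interlacingRows u) : StrictMono v := by
  rw [mem_interlacingRows] at hv
  intro i j hij
  calc
    v i < u i.succ := (hv i).2
    _ ≤ u j.castSucc := hu (Fin.succ_le_castSucc_iff.2 hij)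
    _ ≤ v j := (hv j).1

namespace GTPattern

variable {n : ℕ}

/-- The last row of a pattern, without the zeros that pad it; it is the empty tuple if `n = 0`. -/
def bottomRow (T : GTPattern n) : Fin n → ℕ :=
  fun j => T.entry ⟨n - 1, Nat.sub_lt j.pos Nat.one_pos⟩ j

/-- The pattern formed by all rows but the last, through which patterns are counted recursively. -/
def deleteBottom (T : GTPattern (n + 1)) : GTPattern n where
  entry i := T.entry i.castSucc
  interlace i _ := T.interlace i.castSucc (Nat.succ_lt_succ i.isLt)
  support i := T.support i.castSucc

/-- The pattern obtained by adding `u`, padded with zeros, as a new last row. -/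
def snoc (T : GTPattern n) (u : Fin (n + 1) → ℕ) (hu : T.bottomRow ∈ interlacingRows u) :
    GTPattern (n + 1) where
  entry i j :=
    if hi : i.1 < n then T.entry ⟨i, hi⟩ j else if hj : j < n + 1 then u ⟨j, hj⟩ else 0
  interlace := by
    rintro ⟨i, hi⟩ hi' j hj
    obtain hlt | rfl : i + 1 < n ∨ n = i + 1 := by grind
    · simpa [hlt, Nat.lt_of_succ_lt hlt] using T.interlace ⟨i, _⟩ hlt j hj
    · have hji : j ≤ i := hj
      simpa [hji, Nat.le_succ_of_le hji, bottomRow] using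
        mem_interlacingRows.1 hu ⟨j, Nat.lt_succ_of_le hji⟩
  support i j hij := by
    by_cases hi : i.1 < n
    · simpa [hi] using T.support ⟨i, hi⟩ j hij
    · have hj : ¬ j ≤ n := by omega
      simp [hi, hj]

theorem bottomRow_deleteBottom_mem_interlacingRows (T : GTPattern (n + 1)) :
    T.deleteBottom.bottomRow ∈ interlacingRows T.bottomRow := by
  rw [mem_interlacingRows]
  intro j
  obtain ⟨m, rfl⟩ := Nat.exists_eq_add_one.2 j.pos
  exact T.interlace ⟨m, by omega⟩ (by simp) j (Nat.lt_succ_iff.1 j.isLt)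

theorem deleteBottom_snoc (T : GTPattern n) (u : Fin (n + 1) → ℕ)
    (hu : T.bottomRow ∈ interlacingRows u) : (T.snoc u hu).deleteBottom = T := by
  ext i j
  simp [snoc, deleteBottom]

theorem bottomRow_snoc (T : GTPattern n) (u : Fin (n + 1) → ℕ)
    (hu : T.bottomRow ∈ interlacingRows u) : (T.snoc u hu).bottomRow = u := by
  ext j
  simp [snoc, bottomRow, Fin.is_le]

theorem snoc_deleteBottom (T : GTPattern (n + 1)) :
    T.deleteBottom.snoc T.bottomRow T.bottomRow_deleteBottom_mem_interlacingRows = T := by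
  ext i j
  cases i using Fin.lastCases with
  | cast i => simp [snoc, deleteBottom]
  | last =>
    by_cases hj : j < n + 1
    · simp [snoc, bottomRow, Nat.le_of_lt_succ hj, Fin.last]
    · have hnj : n < j := by omega
      simp [snoc, hnj.not_ge, T.support (Fin.last n) j hnj]

/-- Deleting the bottom row `u` is inverse to adding it. -/
def deleteBottomEquiv (u : Fin (n + 1) → ℕ) :
    {T : GTPattern (n + 1) // T.bottomRow = u} ≃
      {T : GTPattern n // T.bottomRow ∈ interlacingRows u} where
  toFun T := ⟨T.1.deleteBottom, by
    simpa only [T.2] using T.1.bottomRow_deleteBottom_mem_interlacingRows⟩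
  invFun T := ⟨T.1.snoc u T.2, T.1.bottomRow_snoc u T.2⟩
  left_inv := by
    rintro ⟨T, rfl⟩
    exact Subtype.ext T.snoc_deleteBottom
  right_inv T := Subtype.ext (T.1.deleteBottom_snoc u T.2)

/-- Patterns with bottom row `u`, sorted by the row above it. -/
def sigmaInterlacingRowsEquiv (u : Fin (n + 1) → ℕ) :
    (Σ v : interlacingRows u, {T : GTPattern n // T.bottomRow = v}) ≃
      {T : GTPattern (n + 1) // T.bottomRow = u} :=
  (Equiv.sigmaSubtypeFiberEquivSubtype bottomRow fun _ => Iff.rfl).trans (deleteBottomEquiv u).symm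

instance : Unique (GTPattern 0) where
  default := ⟨fun i => i.elim0, fun i => i.elim0, fun i => i.elim0⟩
  uniq _ := GTPattern.ext (Subsingleton.elim _ _)

instance finite_bottomRow_eq (u : Fin n → ℕ) : Finite {T : GTPattern n // T.bottomRow = u} := by
  induction n with
  | zero => infer_instance
  | succ n ih => exact Finite.of_equiv _ (sigmaInterlacingRowsEquiv u)

end GTPattern

theorem GTPcount_eq_card_bottomRow_eq {n : ℕ} (u : Fin n → ℕ) :
    GTPcount n u = Nat.card {T : GTPattern n // T.bottomRow = u} := by
  simp only [GTPcount, GTPattern.bottomRow, funext_iff]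

theorem GTPcount_zero (u : Fin 0 → ℕ) : GTPcount 0 u = 1 := by
  rw [GTPcount_eq_card_bottomRow_eq, Nat.card_eq_one_iff_unique]
  exact ⟨inferInstance, ⟨default, Subsingleton.elim _ _⟩⟩

theorem GTPcount_succ {n : ℕ} (u : Fin (n + 1) → ℕ) :
    GTPcount (n + 1) u = ∑ v ∈ interlacingRows u, GTPcount n v := by
  simp only [GTPcount_eq_card_bottomRow_eq]
  rw [← Nat.card_congr (GTPattern.sigmaInterlacingRowsEquiv u), Nat.card_sigma]
  exact sum_coe_sort _ fun v => Nat.card {T : GTPattern n // T.bottomRow = v}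

section Determinants

variable {R : Type*} [CommRing R]

theorem det_of_sum_eq_sum_piFinset_det {ι α : Type*} [Fintype ι] [DecidableEq ι]
    (s : ι → Finset α) (f : ι → α → ι → R) :
    (Matrix.of fun i j => ∑ x ∈ s i, f i x j).det =
      ∑ v ∈ Fintype.piFinset s, (Matrix.of fun i => f i (v i)).det := by
  have h_rows : (Matrix.of fun i j => ∑ x ∈ s i, f i x j) = fun i => ∑ x ∈ s i, f i x := by
    ext i j
    simp
  rw [h_rows]
  exact Matrix.detRowAlternating.toMultilinearMap.map_sum_finset f s

theorem det_eq_mul_det_succ_sub_castSucc {n : ℕ} (A : Matrix (Fin (n + 1)) (Fin (n + 1)) R)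
    {c : R} (hA : ∀ i, A i 0 = c) :
    A.det = c * (Matrix.of fun i j : Fin n => A i.succ j.succ - A i.castSucc j.succ).det := by
  let B : Matrix (Fin (n + 1)) (Fin (n + 1)) R :=
    Fin.cons (A 0) fun i j => A i.succ j - A i.castSucc j
  have hAB : A.det = B.det :=
    Matrix.det_eq_of_forall_row_eq_smul_add_pred (fun _ => 1) (fun _ => rfl) fun i j => by simp [B]
  have hB_zero : B 0 0 = c := hA 0
  have hB_succ (i : Fin n) : B i.succ 0 = 0 := by simp [B, hA]
  rw [hAB, Matrix.det_succ_column_zero, Fin.sum_univ_succ]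
  simp only [hB_zero, hB_succ, Fin.val_zero, pow_zero, one_mul, mul_zero, zero_mul,
    sum_const_zero, add_zero]
  rfl

theorem sum_Ico_choose_cast {a b : ℕ} (hab : a ≤ b) (k : ℕ) :
    ∑ x ∈ Ico a b, (x.choose k : R) = b.choose (k + 1) - a.choose (k + 1) := by
  induction b, hab using Nat.le_induction with
  | base => simp
  | succ b hb ih =>
    rw [sum_Ico_succ_top hb, ih, Nat.choose_succ_succ]
    push_cast
    ring

variable (R) in
/-- The matrix of binomial coefficients `choose (u i) j`, whose determinant counts patterns. -/
def chooseMatrix {n : ℕ} (u : Fin n → ℕ) : Matrix (Fin n) (Fin n) R :=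
  Matrix.of fun i j => ((u i).choose j : R)

theorem sum_interlacingRows_det_chooseMatrix {n : ℕ} {u : Fin (n + 1) → ℕ} (hu : Monotone u) :
    ∑ v ∈ interlacingRows u, (chooseMatrix R v).det = (chooseMatrix R u).det := by
  have h_col (i : Fin (n + 1)) : chooseMatrix R u i 0 = 1 := by simp [chooseMatrix]
  rw [det_eq_mul_det_succ_sub_castSucc _ h_col, one_mul]
  simp only [chooseMatrix, Matrix.of_apply, Fin.val_succ,
    ← sum_Ico_choose_cast (hu (Fin.castSucc_le_succ _))]
  exact (det_of_sum_eq_sum_piFinset_det (ι := Fin n) _ fun _ (x : ℕ) j => (x.choose j : R)).symm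

theorem cast_GTPcount_eq_det_chooseMatrix {n : ℕ} {u : Fin n → ℕ} (hu : Monotone u) :
    (GTPcount n u : R) = (chooseMatrix R u).det := by
  induction n with
  | zero => simp [GTPcount_zero]
  | succ n ih =>
    rw [GTPcount_succ, Nat.cast_sum, ← sum_interlacingRows_det_chooseMatrix hu]
    exact sum_congr rfl fun v hv => ih (strictMono_of_mem_interlacingRows hu hv).monotone

theorem det_vandermonde_natCast [NoZeroDivisors R] {n : ℕ} (u : Fin n → ℕ) :
    (Matrix.vandermonde fun i => (u i : R)).det =
      (∏ i : Fin n, (Nat.factorial i : R)) * (chooseMatrix R u).det := by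
  nontriviality R
  rw [Matrix.det_eval_matrixOfPolynomials_eq_det_vandermonde _
    (fun i : Fin n => descPochhammer R i) (fun i => descPochhammer_natDegree R i)
    (fun i => monic_descPochhammer R i), ← Matrix.det_mul_row]
  congr 1
  ext i j
  simp [chooseMatrix, descPochhammer_eval_eq_descFactorial,
    Nat.descFactorial_eq_factorial_mul_choose]

theorem det_chooseMatrix_val (n : ℕ) : (chooseMatrix R fun i : Fin n => i.1).det = 1 := by
  rw [Matrix.det_of_isLowerTriangular]
  · simp [chooseMatrix]
  · intro i j hij
    simpa [chooseMatrix] using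
      congrArg (Nat.cast (R := R)) (Nat.choose_eq_zero_of_lt (show i.1 < j.1 from hij))

theorem prod_filter_lt_sub_eq_det_vandermonde {n : ℕ} (v : Fin n → R) :
    ∏ p ∈ univ.filter (fun p : Fin n × Fin n => p.1 < p.2), (v p.2 - v p.1) =
      (Matrix.vandermonde v).det := by
  rw [Matrix.det_vandermonde]
  exact prod_finset_product _ _ _ (by simp)

end Determinants

theorem det_chooseMatrix_eq_prod {K : Type*} [Field K] [CharZero K] {n : ℕ} (u : Fin n → ℕ) :
    (chooseMatrix K u).det = ∏ p ∈ univ.filter (fun p : Fin n × Fin n => p.1 < p.2),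
      (((u p.2 : K) - (u p.1 : K)) / ((p.2.1 : K) - (p.1.1 : K))) := by
  have h_factorial : ∏ i : Fin n, (Nat.factorial i : K) ≠ 0 :=
    prod_ne_zero_iff.2 fun i _ => Nat.cast_ne_zero.2 (Nat.factorial_ne_zero i)
  rw [prod_div_distrib, prod_filter_lt_sub_eq_det_vandermonde fun i => (u i : K),
    prod_filter_lt_sub_eq_det_vandermonde fun i : Fin n => (i.1 : K), det_vandermonde_natCast,
    det_vandermonde_natCast, det_chooseMatrix_val, mul_one, mul_div_cancel_left₀ _ h_factorial]

/-- Pairs of GT patterns with the same bottom row (tilings of the whole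
hexagon) are counted by the square of the product formula. -/
theorem stmt_13 (n : ℕ) (u : Fin n → ℕ) (hu : StrictMono u) :
    (Nat.card
        ({T : GTPattern n //
            ∀ j : Fin n, T.entry ⟨n - 1, Nat.sub_lt j.pos Nat.one_pos⟩ j.1 = u j} ×
         {T : GTPattern n //
            ∀ j : Fin n, T.entry ⟨n - 1, Nat.sub_lt j.pos Nat.one_pos⟩ j.1 = u j}) : ℚ) =
      (∏ p ∈ Finset.univ.filter (fun p : Fin n × Fin n => p.1 < p.2),
        (((u p.2 : ℚ) - (u p.1 : ℚ)) / ((p.2.1 : ℚ) - (p.1.1 : ℚ)))) ^ 2 := by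
  rw [Nat.card_prod, Nat.cast_mul, ← sq, ← det_chooseMatrix_eq_prod,
    ← cast_GTPcount_eq_det_chooseMatrix hu.monotone, GTPcount]
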